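/- Let Γ ⊆ ℝⁿ be an open convex cone containing the positive cone Γ₊, and let F be continuous on the closure of Γ, positive on Γ, vanishing on ∂Γ, concave and positively homogeneous of degree 1 on Γ, with H(κ) = Σᵢκᵢ > 0 on Γ. Then for every fixed ε > 0 and all constants δ > 0 and κ̄ > 0, the set Λ̃_{δ,κ̄} = {κ ∈ Γ_ε : δ ≤ F_ε(κ) and κᵢ ≤ κ̄ for all i} is a compact subset of Γ_ε. -/

import Mathlib

/-!
The map `φ_ε` multiplies `H` by `1 + nε > 0`, so `H > 0` on `Γ` forces `H > 0` on `Γ_ε`; with the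
upper bound `κᵢ ≤ κ̄` this bounds every coordinate from below, and the set is bounded. It is closed
because `Γ` may be replaced by `closure Γ` in its definition: on `∂Γ` the function `F` vanishes, so
`F ≥ δ > 0` excludes boundary points; closedness then follows from the continuity of `F` on
`closure Γ`.
-/

noncomputable section

/-- `H κ = Σᵢ κᵢ`. -/
def Hsum {n : ℕ} (κ : Fin n → ℝ) : ℝ := ∑ i, κ i

/-- `φ_ε(κ) = (κᵢ + εH(κ))ᵢ`, so that `F_ε = F ∘ φ_ε` on `Γ_ε = φ_ε⁻¹(Γ)`. -/
def phi (ε : ℝ) {n : ℕ} (κ : Fin n → ℝ) : Fin n → ℝ := fun i => κ i + ε * Hsum κ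

theorem Hsum_phi (ε : ℝ) {n : ℕ} (κ : Fin n → ℝ) :
    Hsum (phi ε κ) = (1 + n * ε) * Hsum κ := by
  have h : Hsum (phi ε κ) = Hsum κ + n * (ε * Hsum κ) := by
    simp [Hsum, phi, Finset.sum_add_distrib]
  rw [h]; ring

theorem continuous_phi (ε : ℝ) {n : ℕ} : Continuous (phi ε : (Fin n → ℝ) → Fin n → ℝ) := by
  unfold phi Hsum
  fun_prop

/-- An upper bound on all coordinates and positivity of the sum bound each coordinate below. -/
theorem coord_lower_bound {n : ℕ} (κ : Fin n → ℝ) (c : ℝ) (hc : ∀ i, κ i ≤ c)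
    (hH : 0 < Hsum κ) (i : Fin n) : c - n * c ≤ κ i := by
  have h : c - κ i ≤ ∑ j, (c - κ j) :=
    Finset.single_le_sum (f := fun j => c - κ j) (fun j _ => sub_nonneg.2 (hc j))
      (Finset.mem_univ i)
  have h2 : ∑ j, (c - κ j) = n * c - Hsum κ := by
    simp [Hsum, Finset.sum_sub_distrib]
  linarith

/-- let `Γ ⊇ Γ₊` be an open convex cone and let `F` be continuous on
`closure Γ`, positive on `Γ`, vanishing on `∂Γ`, concave and positively homogeneous of
degree 1 on `Γ`, with `H > 0` on `Γ`.  Then for each fixed `ε > 0` and all `δ > 0`,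
`κ̄ > 0`, the set `Λ̃_{δ,κ̄} = {κ ∈ Γ_ε : δ ≤ F_ε(κ), κᵢ ≤ κ̄ ∀i}` is a compact subset of
`Γ_ε`. -/
theorem stmt9 {n : ℕ} (Γ : Set (Fin n → ℝ)) (hopen : IsOpen Γ) (hconv : Convex ℝ Γ)
    (hcone : ∀ κ ∈ Γ, ∀ t : ℝ, 0 < t → t • κ ∈ Γ)
    (hpos : {κ : Fin n → ℝ | ∀ i, 0 < κ i} ⊆ Γ)
    (F : (Fin n → ℝ) → ℝ)
    (hFc : ContinuousOn F (closure Γ))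
    (hFpos : ∀ κ ∈ Γ, 0 < F κ)
    (hFzero : ∀ κ ∈ frontier Γ, F κ = 0)
    (hFconc : ConcaveOn ℝ Γ F)
    (hFhom : ∀ κ ∈ Γ, ∀ t : ℝ, 0 < t → F (t • κ) = t * F κ)
    (hH : ∀ κ ∈ Γ, 0 < Hsum κ)
    (ε : ℝ) (hε : 0 < ε) (δ : ℝ) (hδ : 0 < δ) (κbar : ℝ) (hκbar : 0 < κbar) :
    IsCompact {κ : Fin n → ℝ | phi ε κ ∈ Γ ∧ δ ≤ F (phi ε κ) ∧ ∀ i, κ i ≤ κbar} ∧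
    {κ : Fin n → ℝ | phi ε κ ∈ Γ ∧ δ ≤ F (phi ε κ) ∧ ∀ i, κ i ≤ κbar}
      ⊆ {κ : Fin n → ℝ | phi ε κ ∈ Γ} := by
  refine ⟨?_, fun κ h => h.1⟩
  have hset : {κ : Fin n → ℝ | phi ε κ ∈ Γ ∧ δ ≤ F (phi ε κ) ∧ ∀ i, κ i ≤ κbar} =
      phi ε ⁻¹' (closure Γ ∩ F ⁻¹' Set.Ici δ) ∩ Set.Iic (fun _ => κbar) := by
    ext κ
    constructor
    · rintro ⟨h1, h2, h3⟩
      exact ⟨⟨subset_closure h1, h2⟩, h3⟩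
    · rintro ⟨⟨h1, h2⟩, h3⟩
      have h2' : δ ≤ F (phi ε κ) := h2
      refine ⟨?_, h2', h3⟩
      by_contra hn
      have hfr : phi ε κ ∈ frontier Γ := by
        rw [hopen.frontier_eq]
        exact ⟨h1, hn⟩
      linarith [hFzero _ hfr]
  have hclosed : IsClosed {κ : Fin n → ℝ | phi ε κ ∈ Γ ∧ δ ≤ F (phi ε κ) ∧ ∀ i, κ i ≤ κbar} := by
    rw [hset]
    exact ((hFc.preimage_isClosed_of_isClosed isClosed_closure isClosed_Ici).preimage
      (continuous_phi ε)).inter isClosed_Iic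
  refine (isCompact_Icc (a := fun _ : Fin n => κbar - n * κbar)
    (b := fun _ => κbar)).of_isClosed_subset hclosed ?_
  rintro κ ⟨h1, -, h3⟩
  have hHκ : 0 < Hsum κ := by
    have h := hH _ h1
    rw [Hsum_phi] at h
    exact (pos_iff_pos_of_mul_pos h).1 (by positivity)
  exact ⟨coord_lower_bound κ κbar h3 hHκ, h3⟩
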